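/- arXiv:math/9912113 — 2 statements merged into one kernel-verified Lean document; each statement's English description precedes it below -/
import Mathlib

section
/- Moment-determinacy lemma (even case): let s ∈ (0,1), and let F(x) = f(x) e_{q²}(-x²) with f(x) = Σ_n a_{2n} x^{2n} an even entire function whose coefficients satisfy |a_{2n}| ≤ C s^n q^{2n²} for some C > 0. If ∫_γ x^{2k} F(x) d_q x = 0 for all k ≥ 0 and some γ > 0, then F ≡ 0. -/
open scoped BigOperators

noncomputable section

/-- finite q-Pochhammer symbol `(a;q)_k` -/
def qPoch (q a : ℝ) (k : ℕ) : ℝ := ∏ j ∈ Finset.range k, (1 - a * q ^ j)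

/-- infinite q-Pochhammer symbol `(a;q)_∞` -/
def qPochInf (q a : ℝ) : ℝ := ∏' j : ℕ, (1 - a * q ^ j)

/-- q-integral over the lattice `L(γ) = {± q^k γ}` -/
def qInt (q γ : ℝ) (f : ℝ → ℝ) : ℝ :=
  (1 - q) * ∑' k : ℤ, (q ^ k * γ) * (f (q ^ k * γ) + f (-(q ^ k * γ)))

/-- k-th q-moment -/
def qMoment (q γ : ℝ) (e : ℕ) (f : ℝ → ℝ) : ℝ :=
  q ^ (e * (e + 1) / 2) * qInt q γ (fun x => f x * x ^ e)

/-- k-th strict q-moment -/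
def qNu (q γ : ℝ) (e : ℕ) (f : ℝ → ℝ) : ℝ :=
  q ^ (e * (e + 1) / 2) * qInt q γ (fun x => |f x * x ^ e|)

/-- q-derivative -/
def qDeriv (q : ℝ) (f : ℝ → ℝ) : ℝ → ℝ := fun x => (f x - f (q * x)) / ((1 - q) * x)

/-- q-factorial `[e]_q!` -/
def qFact (q : ℝ) (e : ℕ) : ℝ := qPoch q q e / (1 - q) ^ e

/-- q-binomial coefficient -/
def qBinom (q : ℝ) (n k : ℕ) : ℝ := qPoch q q n / (qPoch q q k * qPoch q q (n - k))

/-- q-convolution -/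
def qConv (q γ : ℝ) (f g : ℝ → ℝ) : ℝ → ℝ :=
  fun x => ∑' e : ℕ, (-1) ^ e * qMoment q γ e f / qFact q e * (qDeriv q)^[e] g x

/-- the q-Gaussian `e_{q²}(-x²)` -/
def qGauss (q : ℝ) : ℝ → ℝ := fun x => 1 / qPochInf (q ^ 2) (-(x ^ 2))

/-- discrete q-Hermite II polynomials -/
def qHermiteII (q : ℝ) (k : ℕ) (x : ℝ) : ℝ :=
  qPoch q q k * ∑ l ∈ Finset.range (k / 2 + 1),
    (-1) ^ l * q ^ (2 * l ^ 2 + l) / q ^ (2 * l * k) * x ^ (k - 2 * l) /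
      (qPoch (q ^ 2) (q ^ 2) l * qPoch q q (k - 2 * l))

/-- discrete delta function on the lattice, supported at `η γ q^p` -/
def qdelta (q γ η : ℝ) (p : ℤ) : ℝ → ℝ := fun x => if x = η * γ * q ^ p then 1 else 0

/-- The Newton basis polynomial `∏_{j<n} (x - t j)`. -/
def newtonBasis (t : ℕ → ℝ) (n : ℕ) (x : ℝ) : ℝ := ∏ j ∈ Finset.range n, (x - t j)

lemma newtonBasis_succ (t : ℕ → ℝ) (n : ℕ) (x : ℝ) :
    newtonBasis t (n + 1) x = newtonBasis t n x * (x - t n) :=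
  Finset.prod_range_succ _ _

lemma newtonBasis_succ_left (t : ℕ → ℝ) (n : ℕ) (x : ℝ) :
    newtonBasis t (n + 1) x = (x - t 0) * newtonBasis (fun j => t (j + 1)) n x := by
  rw [newtonBasis, Finset.prod_range_succ', mul_comm]
  rfl

lemma abs_newtonBasis_le {t : ℕ → ℝ} (ht : ∀ j, t j ∈ Set.Ioo (0 : ℝ) 1) {x : ℝ} (hx : 1 ≤ x)
    (n : ℕ) : |newtonBasis t n x| ≤ x ^ n := by
  rw [newtonBasis, Finset.abs_prod]
  calc _ ≤ ∏ _j ∈ Finset.range n, x := by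
        refine Finset.prod_le_prod (fun _ _ => abs_nonneg _) fun j _ => ?_
        have := ht j
        rw [abs_le]
        constructor <;> linarith [this.1, this.2]
    _ = x ^ n := by simp

lemma abs_mul_newtonBasis_le {t : ℕ → ℝ} (ht : ∀ j, t j ∈ Set.Ioo (0 : ℝ) 1) {b : ℕ → ℝ}
    {M r x : ℝ} (hx : 1 ≤ x) (hxr : x < r) (hb : ∀ n, |b n| * r ^ n ≤ M) (n : ℕ) :
    |b n * newtonBasis t n x| ≤ M * (x / r) ^ n := by
  have hr : 0 < r := by linarith
  have h1 : |b n| ≤ M / r ^ n := by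
    rw [le_div_iff₀ (by positivity)]
    exact hb n
  calc |b n * newtonBasis t n x| = |b n| * |newtonBasis t n x| := abs_mul _ _
    _ ≤ M / r ^ n * x ^ n := by
        have := abs_newtonBasis_le ht hx n
        have := (abs_nonneg _).trans h1
        gcongr
    _ = M * (x / r) ^ n := by rw [div_pow]; ring

lemma summable_newton {t : ℕ → ℝ} (ht : ∀ j, t j ∈ Set.Ioo (0 : ℝ) 1) {b : ℕ → ℝ}
    {M r x : ℝ} (hx : 1 ≤ x) (hxr : x < r) (hb : ∀ n, |b n| * r ^ n ≤ M) :
    Summable fun n => b n * newtonBasis t n x := by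
  have hr : 0 < r := by linarith
  refine Summable.of_norm_bounded (g := fun n => M * (x / r) ^ n) ?_
    (abs_mul_newtonBasis_le ht hx hxr hb)
  exact (summable_geometric_of_lt_one (by positivity) ((div_lt_one hr).2 hxr)).mul_left M

lemma abs_tsum_newton_le {t : ℕ → ℝ} (ht : ∀ j, t j ∈ Set.Ioo (0 : ℝ) 1) {b : ℕ → ℝ}
    {M r x : ℝ} (hx : 1 ≤ x) (hxr : x < r) (hb : ∀ n, |b n| * r ^ n ≤ M) :
    |∑' n, b n * newtonBasis t n x| ≤ M * (1 - x / r)⁻¹ := by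
  have hr : 0 < r := by linarith
  exact tsum_of_norm_bounded (f := fun n => b n * newtonBasis t n x)
    ((hasSum_geometric_of_lt_one (by positivity) ((div_lt_one hr).2 hxr)).mul_left M)
    (abs_mul_newtonBasis_le ht hx hxr hb)

lemma tsum_newton_eq_add {t : ℕ → ℝ} (ht : ∀ j, t j ∈ Set.Ioo (0 : ℝ) 1) {b : ℕ → ℝ}
    {M r x : ℝ} (hx : 1 ≤ x) (hxr : x < r) (hb : ∀ n, |b n| * r ^ n ≤ M) :
    ∑' n, b n * newtonBasis t n x =
      b 0 + (x - t 0) * ∑' n, b (n + 1) * newtonBasis (fun j => t (j + 1)) n x := by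
  rw [(summable_newton ht hx hxr hb).tsum_eq_zero_add, ← tsum_mul_left]
  congr 1
  · simp [newtonBasis]
  · refine tsum_congr fun n => ?_
    rw [newtonBasis_succ_left]
    ring

/-- Division of a convergent Newton series by a linear factor at one of its zeros. -/
lemma exists_newton_quotient {t : ℕ → ℝ} (ht : ∀ j, t j ∈ Set.Ioo (0 : ℝ) 1) {b : ℕ → ℝ}
    {M r x : ℝ} (hx : 1 ≤ x) (hxr : x < r) (hb : ∀ n, |b n| * r ^ n ≤ M)
    (h0 : ∑' n, b n * newtonBasis t n x = 0) :
    ∃ c : ℕ → ℝ, (∀ n, |c n| * r ^ n ≤ M / (r - x)) ∧ |b 0| ≤ x * |c 0| ∧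
      ∀ y, 1 ≤ y → y < r → ∑' n, b n * newtonBasis t n y =
        (y - x) * ∑' n, c n * newtonBasis t n y := by
  have hr : 0 < r := by linarith
  have hshift : ∀ m n, |b (n + m)| * r ^ n ≤ M / r ^ m := fun m n => by
    rw [le_div_iff₀ (by positivity), mul_assoc, ← pow_add]
    exact hb (n + m)
  set G : ℕ → ℝ := fun m => ∑' n, b (n + m) * newtonBasis (fun j => t (j + m)) n x with hG
  have hrec : ∀ m, G m = b m + (x - t m) * G (m + 1) := fun m => by
    have := tsum_newton_eq_add (fun j => ht (j + m)) hx hxr (hshift m)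
    simp only [zero_add] at this
    simp only [hG, this, add_assoc, add_comm 1 m]
  have hG0 : G 0 = 0 := h0
  have hbound : ∀ n, |G (n + 1)| * r ^ n ≤ M / (r - x) := fun n => by
    have := abs_tsum_newton_le (fun j => ht (j + (n + 1))) hx hxr (hshift (n + 1))
    calc |G (n + 1)| * r ^ n ≤ M / r ^ (n + 1) * (1 - x / r)⁻¹ * r ^ n := by gcongr
      _ = M / (r - x) := by
        have : r - x ≠ 0 := by linarith
        have : 1 - x / r = (r - x) / r := by field_simp
        rw [this, pow_succ]
        field_simp
  refine ⟨fun n => G (n + 1), hbound, ?_, fun y hy hyr => ?_⟩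
  · have h1 : b 0 = -((x - t 0) * G 1) := by linarith [hrec 0]
    rw [h1, abs_neg, abs_mul]
    have := ht 0
    gcongr
    rw [abs_le]
    constructor <;> linarith [this.1, this.2]
  · have hs := summable_newton ht hy hyr hbound
    have hsb := summable_newton ht hy hyr hb
    have hst : Summable fun n => (x - t n) * (G (n + 1) * newtonBasis t n y) := by
      refine Summable.of_norm_bounded (hs.norm.mul_left x) fun n => ?_
      rw [norm_mul]
      have := ht n
      gcongr
      rw [Real.norm_eq_abs, abs_le]
      constructor <;> linarith [this.1, this.2]
    have hpt : ∀ n, b (n + 1) * newtonBasis t (n + 1) y =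
        ((y - x) * (G (n + 1) * newtonBasis t n y) + (x - t n) * (G (n + 1) * newtonBasis t n y)) -
          (x - t (n + 1)) * (G (n + 1 + 1) * newtonBasis t (n + 1) y) := fun n => by
      rw [hrec (n + 1), newtonBasis_succ]
      ring
    rw [hsb.tsum_eq_zero_add, tsum_congr hpt,
      ((hs.mul_left _).add hst).tsum_sub ((summable_nat_add_iff 1).2 hst),
      (hs.mul_left _).tsum_add hst, tsum_mul_left, hst.tsum_eq_zero_add]
    have := hrec 0
    simp only [newtonBasis, Finset.range_zero, Finset.prod_empty, zero_add] at this ⊢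
    linarith

/-- A Jensen-type bound: many zeros below `r` force a small leading Newton coefficient. -/
lemma abs_newton_coeff_zero_le {t : ℕ → ℝ} (ht : ∀ j, t j ∈ Set.Ioo (0 : ℝ) 1) {r : ℝ}
    {x : ℕ → ℝ} (hx : ∀ i, 1 ≤ x i) (hinj : Function.Injective x) (N : ℕ) :
    (∀ i < N, x i < r) → ∀ (b : ℕ → ℝ) (M : ℝ), (∀ n, |b n| * r ^ n ≤ M) →
      (∀ i < N, ∑' n, b n * newtonBasis t n (x i) = 0) →
      |b 0| ≤ M * ∏ i ∈ Finset.range N, (x i / (r - x i)) := by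
  induction N with
  | zero =>
    intro _ b M hb _
    simpa using hb 0
  | succ N ih =>
    intro hxr b M hb h0
    obtain ⟨c, hc, hbc, hdiv⟩ := exists_newton_quotient ht (hx N) (hxr N N.lt_succ_self) hb
      (h0 N N.lt_succ_self)
    have hc0 := ih (fun i hi => hxr i (hi.trans N.lt_succ_self)) c _ hc fun i hi => by
      have h1 := hdiv (x i) (hx i) (hxr i (hi.trans N.lt_succ_self))
      rw [h0 i (hi.trans N.lt_succ_self)] at h1
      exact (mul_eq_zero.1 h1.symm).resolve_left (sub_ne_zero.2 (hinj.ne hi.ne))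
    have hxN : 0 ≤ x N := by linarith [hx N]
    calc |b 0| ≤ x N * |c 0| := hbc
      _ ≤ x N * (M / (r - x N) * ∏ i ∈ Finset.range N, (x i / (r - x i))) := by gcongr
      _ = _ := by rw [Finset.prod_range_succ]; ring

lemma prod_geometric_div_sub {P : ℝ} (hP : 1 < P) (N : ℕ) :
    ∏ i ∈ Finset.range N, (P ^ i / (P ^ N - P ^ i)) =
      ∏ j ∈ Finset.range N, (P ^ (j + 1) - 1)⁻¹ := by
  rw [← Finset.prod_range_reflect]
  refine Finset.prod_congr rfl fun j hj => ?_
  have hj' := Finset.mem_range.1 hj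
  have h1 : P ^ N = P ^ (N - 1 - j) * P ^ (j + 1) := by
    rw [← pow_add]
    congr 1
    omega
  have h2 : P ^ (N - 1 - j) ≠ 0 := by positivity
  rw [h1, ← mul_sub_one, div_mul_eq_div_div, div_self h2, one_div]

lemma tendsto_newton_bound {q : ℝ} (hq : q ∈ Set.Ioo (0 : ℝ) 1) (C : ℝ) :
    Filter.Tendsto (fun N : ℕ => C / q ^ (N ^ 2) *
      ∏ j ∈ Finset.range N, (((q ^ 2)⁻¹) ^ (j + 1) - 1)⁻¹) Filter.atTop (nhds 0) := by
  obtain ⟨hq0, hq1⟩ := hq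
  have hlt : ∀ j : ℕ, q ^ (2 * j + 2) < 1 := fun j => pow_lt_one₀ hq0.le hq1 (by omega)
  have hfac : ∀ j : ℕ, (((q ^ 2)⁻¹) ^ (j + 1) - 1)⁻¹ = q ^ (2 * j + 2) / (1 - q ^ (2 * j + 2)) :=
    fun j => by
      have h1 : ((q ^ 2)⁻¹) ^ (j + 1) = (q ^ (2 * j + 2))⁻¹ := by
        rw [inv_pow, ← pow_mul, mul_add, mul_one]
      have : 1 - q ^ (2 * j + 2) ≠ 0 := by linarith [hlt j]
      have h2 : (q ^ (2 * j + 2))⁻¹ - 1 = (1 - q ^ (2 * j + 2)) / q ^ (2 * j + 2) := by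
        field_simp
      rw [h1, h2, inv_div]
  set u : ℕ → ℝ := fun N => 1 / q ^ (N ^ 2) *
    ∏ j ∈ Finset.range N, (((q ^ 2)⁻¹) ^ (j + 1) - 1)⁻¹ with hu
  have hupos : ∀ N, 0 < u N := fun N => by
    refine mul_pos (by positivity) (Finset.prod_pos fun j _ => ?_)
    rw [hfac]
    exact div_pos (by positivity) (by linarith [hlt j])
  have hstep : ∀ N, u (N + 1) = u N * (q / (1 - q ^ (2 * N + 2))) := fun N => by
    have : 1 - q ^ (2 * N + 2) ≠ 0 := by linarith [hlt N]
    simp only [hu, Finset.prod_range_succ]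
    rw [hfac N]
    have h1 : q ^ ((N + 1) ^ 2) = q ^ (N ^ 2) * q ^ (2 * N + 1) := by
      rw [← pow_add]
      ring
    rw [h1, pow_succ q (2 * N + 1)]
    rw [pow_succ q (2 * N + 1)] at this
    field_simp
  have hlim : Filter.Tendsto (fun N : ℕ => q / (1 - q ^ (2 * N + 2))) Filter.atTop (nhds q) := by
    have h1 : Filter.Tendsto (fun N : ℕ => q ^ (2 * N + 2)) Filter.atTop (nhds 0) :=
      (tendsto_pow_atTop_nhds_zero_of_lt_one hq0.le hq1).comp
        (Filter.tendsto_atTop_mono (fun N => by simp only [id]; omega) Filter.tendsto_id)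
    have h2 := (h1.const_sub 1).inv₀ (by norm_num)
    simpa [div_eq_mul_inv] using h2.const_mul q
  have hsum : Summable u := by
    refine summable_of_ratio_test_tendsto_lt_one hq1
      (Filter.Eventually.of_forall fun N => (hupos N).ne') (hlim.congr fun N => ?_)
    rw [Real.norm_of_nonneg (hupos _).le, Real.norm_of_nonneg (hupos _).le, hstep,
      mul_div_cancel_left₀ _ (hupos N).ne']
  have := hsum.tendsto_atTop_zero.const_mul C
  rw [mul_zero] at this
  refine this.congr fun N => ?_
  simp only [hu]
  ring

lemma mul_inv_sq_pow_le {q C : ℝ} (hq : q ∈ Set.Ioo (0 : ℝ) 1) {b : ℕ → ℝ}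
    (hb : ∀ n, |b n| ≤ C * q ^ (n ^ 2)) (N n : ℕ) :
    |b n| * (((q ^ 2)⁻¹) ^ N) ^ n ≤ C / q ^ (N ^ 2) := by
  obtain ⟨hq0, hq1⟩ := hq
  have hC : 0 ≤ C := by simpa using (abs_nonneg _).trans (hb 0)
  have h1 : (((q ^ 2)⁻¹) ^ N) ^ n = (q ^ (2 * N * n))⁻¹ := by
    rw [inv_pow, inv_pow, ← pow_mul, ← pow_mul, mul_assoc]
  rw [h1, ← div_eq_mul_inv, div_le_div_iff₀ (by positivity) (by positivity)]
  calc |b n| * q ^ (N ^ 2) ≤ C * q ^ (n ^ 2) * q ^ (N ^ 2) := by gcongr; exact hb n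
    _ = C * q ^ (n ^ 2 + N ^ 2) := by rw [pow_add]; ring
    _ ≤ C * q ^ (2 * N * n) := by
      refine mul_le_mul_of_nonneg_left (pow_le_pow_of_le_one hq0.le hq1.le ?_) hC
      zify
      nlinarith [sq_nonneg ((N : ℤ) - n)]

lemma newton_coeff_zero_eq_zero {q C : ℝ} (hq : q ∈ Set.Ioo (0 : ℝ) 1) {t : ℕ → ℝ}
    (ht : ∀ j, t j ∈ Set.Ioo (0 : ℝ) 1) {b : ℕ → ℝ} (hb : ∀ n, |b n| ≤ C * q ^ (n ^ 2))
    (h0 : ∀ k : ℕ, ∑' n, b n * newtonBasis t n (((q ^ 2)⁻¹) ^ k) = 0) : b 0 = 0 := by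
  have hlim := tendsto_newton_bound hq C
  obtain ⟨hq0, hq1⟩ := hq
  have hP : 1 < (q ^ 2)⁻¹ := (one_lt_inv₀ (by positivity)).2 (pow_lt_one₀ hq0.le hq1 two_ne_zero)
  have hle : ∀ N : ℕ, |b 0| ≤ C / q ^ (N ^ 2) *
      ∏ j ∈ Finset.range N, (((q ^ 2)⁻¹) ^ (j + 1) - 1)⁻¹ := fun N => by
    rw [← prod_geometric_div_sub hP]
    refine abs_newton_coeff_zero_le ht (fun i => one_le_pow₀ hP.le) (pow_right_injective₀
      (by positivity) hP.ne') N (fun i hi => pow_lt_pow_right₀ hP hi) b _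
      (mul_inv_sq_pow_le ⟨hq0, hq1⟩ hb N) fun i _ => h0 i
  exact abs_nonpos_iff.1 (ge_of_tendsto' hlim hle)

/-- A Newton series with coefficients `O(q^{n²})` vanishing at all `q^{-2k}` is zero. -/
lemma newton_coeff_eq_zero {q C : ℝ} (hq : q ∈ Set.Ioo (0 : ℝ) 1) (n : ℕ) :
    ∀ {t : ℕ → ℝ}, (∀ j, t j ∈ Set.Ioo (0 : ℝ) 1) → ∀ {b : ℕ → ℝ},
      (∀ n, |b n| ≤ C * q ^ (n ^ 2)) →
      (∀ k : ℕ, ∑' n, b n * newtonBasis t n (((q ^ 2)⁻¹) ^ k) = 0) → b n = 0 := by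
  induction n with
  | zero => exact fun ht _ hb h0 => newton_coeff_zero_eq_zero hq ht hb h0
  | succ n ih =>
    intro t ht b hb h0
    have hb0 := newton_coeff_zero_eq_zero hq ht hb h0
    obtain ⟨hq0, hq1⟩ := hq
    have hP : 1 < (q ^ 2)⁻¹ :=
      (one_lt_inv₀ (by positivity)).2 (pow_lt_one₀ hq0.le hq1 two_ne_zero)
    have hC : 0 ≤ C := by simpa using (abs_nonneg _).trans (hb 0)
    refine ih (t := fun j => t (j + 1)) (fun j => ht (j + 1)) (b := fun n => b (n + 1))
      (fun n => (hb (n + 1)).trans ?_) fun k => ?_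
    · refine mul_le_mul_of_nonneg_left (pow_le_pow_of_le_one hq0.le hq1.le ?_) hC
      gcongr
      omega
    · have h1 := h0 k
      have hfac : ∑' n, b n * newtonBasis t n (((q ^ 2)⁻¹) ^ k) = (((q ^ 2)⁻¹) ^ k - t 0) *
          ∑' n, b (n + 1) * newtonBasis (fun j => t (j + 1)) n (((q ^ 2)⁻¹) ^ k) := by
        rw [tsum_newton_eq_add ht (one_le_pow₀ hP.le) (pow_lt_pow_right₀ hP k.lt_succ_self)
          (mul_inv_sq_pow_le ⟨hq0, hq1⟩ hb (k + 1)), hb0, zero_add]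
      rw [hfac] at h1
      have := one_le_pow₀ hP.le (n := k)
      exact (mul_eq_zero.1 h1).resolve_left (by linarith [(ht 0).2])

lemma multipliable_qPochInf {q : ℝ} (hq : q ∈ Set.Ioo (0 : ℝ) 1) (x : ℝ) :
    Multipliable fun j : ℕ => 1 - -(x ^ 2) * (q ^ 2) ^ j := by
  have h : Summable fun j : ℕ => x ^ 2 * (q ^ 2) ^ j :=
    (summable_geometric_of_lt_one (by positivity)
      (pow_lt_one₀ hq.1.le hq.2 two_ne_zero)).mul_left _
  simpa [sub_eq_add_neg] using multipliable_one_add_of_summable h.norm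

lemma one_le_qPochInf {q : ℝ} (hq : q ∈ Set.Ioo (0 : ℝ) 1) (x : ℝ) :
    1 ≤ qPochInf (q ^ 2) (-(x ^ 2)) := by
  refine ge_of_tendsto' (multipliable_qPochInf hq x).hasProd fun s => ?_
  refine Finset.one_le_prod fun j _ => ?_
  have : 0 ≤ x ^ 2 * (q ^ 2) ^ j := by positivity
  linarith

lemma qGauss_pos {q : ℝ} (hq : q ∈ Set.Ioo (0 : ℝ) 1) (x : ℝ) : 0 < qGauss q x :=
  one_div_pos.2 (zero_lt_one.trans_le (one_le_qPochInf hq x))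

lemma qGauss_mul {q : ℝ} (hq : q ∈ Set.Ioo (0 : ℝ) 1) (x : ℝ) :
    qGauss q (q * x) = (1 + x ^ 2) * qGauss q x := by
  have hshift : ∀ j : ℕ, 1 - -(x ^ 2) * (q ^ 2) ^ (j + 1) = 1 - -((q * x) ^ 2) * (q ^ 2) ^ j :=
    fun j => by ring
  have h : qPochInf (q ^ 2) (-(x ^ 2)) = (1 + x ^ 2) * qPochInf (q ^ 2) (-((q * x) ^ 2)) := by
    have hm := multipliable_qPochInf hq (q * x)
    unfold qPochInf
    rw [tprod_eq_zero_mul' (by simpa only [hshift] using hm)]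
    simp only [hshift]
    congr 1
    ring
  have h1 := one_le_qPochInf hq (q * x)
  have h2 : 0 < 1 + x ^ 2 := by positivity
  rw [qGauss, qGauss, h]
  field_simp

/-- The summand of the `2n`-th moment of the `q`-Gaussian on the positive half of the lattice. -/
def gaussTerm (q γ : ℝ) (n : ℕ) (k : ℤ) : ℝ := (q ^ k * γ) ^ (2 * n + 1) * qGauss q (q ^ k * γ)

lemma gaussTerm_pos {q γ : ℝ} (hq : q ∈ Set.Ioo (0 : ℝ) 1) (hγ : 0 < γ) (n : ℕ) (k : ℤ) :
    0 < gaussTerm q γ n k := by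
  have := hq.1
  have := qGauss_pos hq (q ^ k * γ)
  unfold gaussTerm
  positivity

lemma gaussTerm_add_one {q : ℝ} (hq : q ∈ Set.Ioo (0 : ℝ) 1) (γ : ℝ) (n : ℕ) (k : ℤ) :
    gaussTerm q γ n (k + 1) = q ^ (2 * n + 1) * (1 + (q ^ k * γ) ^ 2) * gaussTerm q γ n k := by
  have h : q ^ (k + 1) * γ = q * (q ^ k * γ) := by rw [zpow_add_one₀ hq.1.ne']; ring
  rw [gaussTerm, gaussTerm, h, qGauss_mul hq, mul_pow]
  ring

lemma gaussTerm_add_one_eq {q : ℝ} (hq : q ∈ Set.Ioo (0 : ℝ) 1) (γ : ℝ) (n : ℕ) (k : ℤ) :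
    gaussTerm q γ n (k + 1) = q ^ (2 * n + 1) * (gaussTerm q γ n k + gaussTerm q γ (n + 1) k) := by
  rw [gaussTerm_add_one hq]
  simp only [gaussTerm]
  ring

lemma summable_gaussTerm {q γ : ℝ} (hq : q ∈ Set.Ioo (0 : ℝ) 1) (hγ : 0 < γ) (n : ℕ) :
    Summable (gaussTerm q γ n) := by
  have hpos := gaussTerm_pos hq hγ n
  have hstep := gaussTerm_add_one hq γ n
  obtain ⟨hq0, hq1⟩ := hq
  have hpow := tendsto_pow_atTop_nhds_zero_of_lt_one hq0.le hq1
  refine Summable.of_nat_of_neg ?_ ?_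
  · refine summable_of_ratio_test_tendsto_lt_one (l := q ^ (2 * n + 1))
      (pow_lt_one₀ hq0.le hq1 (by omega)) (Filter.Eventually.of_forall fun k => (hpos k).ne') ?_
    have h1 : Filter.Tendsto (fun k : ℕ => q ^ (2 * n + 1) * (1 + (q ^ k * γ) ^ 2)) Filter.atTop
        (nhds (q ^ (2 * n + 1) * (1 + (0 * γ) ^ 2))) :=
      (((hpow.mul_const γ).pow 2).const_add 1).const_mul _
    simp only [zero_mul, ne_eq, OfNat.ofNat_ne_zero, not_false_eq_true, zero_pow, add_zero,
      mul_one] at h1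
    refine h1.congr fun k => ?_
    rw [Real.norm_of_nonneg (hpos _).le, Real.norm_of_nonneg (hpos _).le, Nat.cast_succ, hstep,
      mul_div_cancel_right₀ _ (hpos k).ne', zpow_natCast]
  · refine summable_of_ratio_test_tendsto_lt_one (l := 0) zero_lt_one
      (Filter.Eventually.of_forall fun k => (hpos _).ne') ?_
    have hsq : Filter.Tendsto (fun k : ℕ => q ^ (k + 1)) Filter.atTop (nhds 0) :=
      hpow.comp (Filter.tendsto_add_atTop_nat 1)
    have h1 : Filter.Tendsto (fun k : ℕ => (q ^ (2 * n + 1))⁻¹ * γ⁻¹ ^ 2 * (q ^ (k + 1)) ^ 2)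
        Filter.atTop (nhds ((q ^ (2 * n + 1))⁻¹ * γ⁻¹ ^ 2 * 0 ^ 2)) := (hsq.pow 2).const_mul _
    simp only [ne_eq, OfNat.ofNat_ne_zero, not_false_eq_true, zero_pow, mul_zero] at h1
    refine squeeze_zero (fun k => by positivity) (fun k => ?_) h1
    rw [Real.norm_of_nonneg (hpos _).le, Real.norm_of_nonneg (hpos _).le]
    have h2 := hstep (-((k + 1 : ℕ) : ℤ))
    have h3 : -((k + 1 : ℕ) : ℤ) + 1 = -(k : ℤ) := by push_cast; ring
    rw [h3, zpow_neg, zpow_natCast] at h2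
    have h4 := hpos (-((k + 1 : ℕ) : ℤ))
    rw [h2, div_mul_cancel_right₀ h4.ne', mul_inv, mul_assoc]
    gcongr
    have h5 : γ⁻¹ ^ 2 * (q ^ (k + 1)) ^ 2 = (((q ^ (k + 1))⁻¹ * γ) ^ 2)⁻¹ := by
      field_simp
    rw [h5]
    gcongr
    linarith

/-- The `2n`-th moment of the `q`-Gaussian on the positive half of the lattice. -/
def gaussMoment (q γ : ℝ) (n : ℕ) : ℝ := ∑' k : ℤ, gaussTerm q γ n k

lemma gaussMoment_pos {q γ : ℝ} (hq : q ∈ Set.Ioo (0 : ℝ) 1) (hγ : 0 < γ) (n : ℕ) :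
    0 < gaussMoment q γ n :=
  (summable_gaussTerm hq hγ n).tsum_pos (fun k => (gaussTerm_pos hq hγ n k).le) 0
    (gaussTerm_pos hq hγ n 0)

lemma gaussMoment_succ {q γ : ℝ} (hq : q ∈ Set.Ioo (0 : ℝ) 1) (hγ : 0 < γ) (n : ℕ) :
    gaussMoment q γ n = q ^ (2 * n + 1) * (gaussMoment q γ n + gaussMoment q γ (n + 1)) := by
  unfold gaussMoment
  rw [← (summable_gaussTerm hq hγ n).tsum_add (summable_gaussTerm hq hγ (n + 1)),
    ← tsum_mul_left, ← (Equiv.addRight (1 : ℤ)).tsum_eq (gaussTerm q γ n)]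
  exact tsum_congr fun k => gaussTerm_add_one_eq hq γ n k

lemma gaussMoment_add {q γ : ℝ} (hq : q ∈ Set.Ioo (0 : ℝ) 1) (hγ : 0 < γ) (m n : ℕ) :
    gaussMoment q γ (n + m) = gaussMoment q γ m *
      ((q ^ (n ^ 2))⁻¹ * newtonBasis (fun j => q ^ (2 * j + 1)) n (((q ^ 2)⁻¹) ^ m)) := by
  have hq0 := hq.1
  induction n with
  | zero => simp [newtonBasis]
  | succ n ih =>
    have h := gaussMoment_succ hq hγ (n + m)
    have h1 : gaussMoment q γ (n + m + 1) =
        ((q ^ (2 * (n + m) + 1))⁻¹ - 1) * gaussMoment q γ (n + m) := by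
      field_simp
      linarith
    have h2 : n + 1 + m = n + m + 1 := by ring
    have h3 : q ^ ((n + 1) ^ 2) = q ^ (n ^ 2) * q ^ (2 * n + 1) := by rw [← pow_add]; ring
    have h4 : q ^ (2 * (n + m) + 1) = q ^ (2 * n + 1) * (q ^ 2) ^ m := by
      rw [← pow_mul, ← pow_add]; ring
    rw [h2, h1, ih, newtonBasis_succ, h3, h4, inv_pow]
    field_simp

lemma tsum_mul_gaussMoment_eq_zero {q γ s C : ℝ} (hq : q ∈ Set.Ioo (0 : ℝ) 1) (hγ : 0 < γ)
    (hs : s ∈ Set.Ioo (0 : ℝ) 1) {a : ℕ → ℝ} (hC : 0 < C)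
    (ha : ∀ n : ℕ, |a n| ≤ C * s ^ n * q ^ (2 * n ^ 2))
    {F : ℝ → ℝ} (hF : ∀ x, F x = (∑' n : ℕ, a n * x ^ (2 * n)) * qGauss q x)
    {m : ℕ} (hmom : qInt q γ (fun x => x ^ (2 * m) * F x) = 0) :
    ∑' n, a n * gaussMoment q γ (n + m) = 0 := by
  have heven : ∀ x, F (-x) = F x := fun x => by
    have hG : qGauss q (-x) = qGauss q x := by simp [qGauss]
    simp only [hF, hG, (even_two_mul _).neg_pow]
  have hterm : ∀ k : ℤ, (q ^ k * γ) * ((q ^ k * γ) ^ (2 * m) * F (q ^ k * γ) +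
      (-(q ^ k * γ)) ^ (2 * m) * F (-(q ^ k * γ))) =
        2 * ∑' n, a n * gaussTerm q γ (n + m) k := fun k => by
    rw [heven, (even_two_mul _).neg_pow, hF, ← tsum_mul_right]
    calc _ = 2 * ((q ^ k * γ) ^ (2 * m + 1) *
          ∑' n, a n * (q ^ k * γ) ^ (2 * n) * qGauss q (q ^ k * γ)) := by ring
      _ = _ := by
        rw [← tsum_mul_left]
        congr 1
        refine tsum_congr fun n => ?_
        rw [gaussTerm]
        ring
  have hsum : Summable (Function.uncurry fun (n : ℕ) (k : ℤ) => a n * gaussTerm q γ (n + m) k) := by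
    refine Summable.of_norm ((summable_prod_of_nonneg fun _ => norm_nonneg _).2 ⟨fun n => ?_, ?_⟩)
    · exact ((summable_gaussTerm hq hγ (n + m)).mul_left (a n)).norm
    · have hnorm : ∀ n, ∑' k : ℤ, ‖a n * gaussTerm q γ (n + m) k‖ =
          |a n| * gaussMoment q γ (n + m) := fun n => by
        rw [gaussMoment, ← tsum_mul_left]
        refine tsum_congr fun k => ?_
        rw [norm_mul, Real.norm_of_nonneg (gaussTerm_pos hq hγ (n + m) k).le, Real.norm_eq_abs]
      simp only [Function.uncurry, hnorm]
      refine Summable.of_nonneg_of_le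
        (fun n => mul_nonneg (abs_nonneg _) (gaussMoment_pos hq hγ _).le) (fun n => ?_)
        ((summable_geometric_of_lt_one hs.1.le hs.2).mul_left
          (C * gaussMoment q γ m / q ^ (m ^ 2)))
      have hq0 := hq.1
      have hs0 := hs.1
      have hS := gaussMoment_pos hq hγ m
      have hN := (le_abs_self _).trans (abs_newtonBasis_le (t := fun j => q ^ (2 * j + 1))
        (fun j => ⟨by positivity, pow_lt_one₀ hq0.le hq.2 (by omega)⟩) (n := n)
        (one_le_pow₀ (n := m) ((one_le_inv₀ (by positivity)).2 (pow_le_one₀ (n := 2) hq0.le hq.2.le))))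
      have hpow := mul_inv_sq_pow_le (C := 1) (b := fun n => q ^ (n ^ 2)) hq
        (fun n => by rw [abs_of_pos (by positivity), one_mul]) m n
      rw [abs_of_pos (by positivity)] at hpow
      calc |a n| * gaussMoment q γ (n + m)
          ≤ C * s ^ n * q ^ (2 * n ^ 2) * gaussMoment q γ (n + m) :=
            mul_le_mul_of_nonneg_right (ha n) (gaussMoment_pos hq hγ _).le
        _ ≤ C * s ^ n * q ^ (2 * n ^ 2) *
            (gaussMoment q γ m * ((q ^ (n ^ 2))⁻¹ * (((q ^ 2)⁻¹) ^ m) ^ n)) := by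
            rw [gaussMoment_add hq hγ]
            gcongr
        _ = C * s ^ n * gaussMoment q γ m * (q ^ (n ^ 2) * (((q ^ 2)⁻¹) ^ m) ^ n) := by
            rw [two_mul, pow_add]
            field_simp
        _ ≤ C * s ^ n * gaussMoment q γ m * (1 / q ^ (m ^ 2)) := by gcongr
        _ = C * gaussMoment q γ m / q ^ (m ^ 2) * s ^ n := by ring
  have h0 : ∑' k : ℤ, ∑' n, a n * gaussTerm q γ (n + m) k = 0 := by
    have h1 : (1 - q) * (2 * ∑' k : ℤ, ∑' n, a n * gaussTerm q γ (n + m) k) = 0 := by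
      rw [← hmom, qInt, ← tsum_mul_left]
      simp only [hterm]
    have : 1 - q ≠ 0 := by linarith [hq.2]
    simpa [this] using h1
  rw [hsum.tsum_comm] at h0
  simpa only [gaussMoment, tsum_mul_left] using h0

/-- Moment-determinacy lemma, even case. -/
theorem stmt7 (q γ s : ℝ) (hq : q ∈ Set.Ioo (0 : ℝ) 1) (hγ : 0 < γ)
    (hs : s ∈ Set.Ioo (0 : ℝ) 1)
    (a : ℕ → ℝ) (C : ℝ) (hC : 0 < C)
    (ha : ∀ n : ℕ, |a n| ≤ C * s ^ n * q ^ (2 * n ^ 2))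
    (F : ℝ → ℝ) (hF : ∀ x, F x = (∑' n : ℕ, a n * x ^ (2 * n)) * qGauss q x)
    (hmom : ∀ k : ℕ, qInt q γ (fun x => x ^ (2 * k) * F x) = 0) :
    ∀ x, F x = 0 := by
  have hq0 := hq.1
  have hb : ∀ n : ℕ, |a n / q ^ (n ^ 2)| ≤ C * q ^ (n ^ 2) := fun n => by
    rw [abs_div, abs_of_pos (pow_pos hq0 _), div_le_iff₀ (by positivity)]
    calc |a n| ≤ C * s ^ n * q ^ (2 * n ^ 2) := ha n
      _ ≤ C * 1 * q ^ (2 * n ^ 2) := by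
        have := pow_le_one₀ hs.1.le hs.2.le (n := n)
        gcongr
      _ = C * q ^ (n ^ 2) * q ^ (n ^ 2) := by rw [two_mul, pow_add]; ring
  have hzero : ∀ k : ℕ, ∑' n, a n / q ^ (n ^ 2) *
      newtonBasis (fun j => q ^ (2 * j + 1)) n (((q ^ 2)⁻¹) ^ k) = 0 := fun k => by
    have h := tsum_mul_gaussMoment_eq_zero hq hγ hs hC ha hF (hmom k)
    have h1 : ∀ n, a n * gaussMoment q γ (n + k) = gaussMoment q γ k * (a n / q ^ (n ^ 2) *
        newtonBasis (fun j => q ^ (2 * j + 1)) n (((q ^ 2)⁻¹) ^ k)) := fun n => by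
      rw [gaussMoment_add hq hγ]
      ring
    rw [tsum_congr h1, tsum_mul_left] at h
    exact (mul_eq_zero.1 h).resolve_left (gaussMoment_pos hq hγ k).ne'
  have ha0 : ∀ n, a n = 0 := fun n => by
    have h := newton_coeff_eq_zero hq n (t := fun j => q ^ (2 * j + 1))
      (fun j => ⟨by positivity, pow_lt_one₀ hq0.le hq.2 (by omega)⟩) hb hzero
    exact (div_eq_zero_iff.1 h).resolve_right (by positivity)
  intro x
  simp [hF, ha0]
end
end

section
/- Moment-determinacy lemma (general case): let s ∈ (0,1) and F(x) = Σ_{n≥0} a_n x^n · e_{q²}(-x²) with |a_n| ≤ C s^n q^{n²/2} for some C > 0. If for some γ > 0, ∫_γ F(x) x^k d_q x = 0 for all k ∈ ℤ_{≥0}, then F = 0. -/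
open scoped BigOperators

noncomputable section

/-! ### Partial products -/

lemma qPoch_pos {Q b : ℝ} (hQ : Q ∈ Set.Ioo (0 : ℝ) 1) (hb : b ∈ Set.Ioo (0 : ℝ) 1) (k : ℕ) :
    0 < qPoch Q b k := by
  refine Finset.prod_pos fun j _ => ?_
  have h1 : Q ^ j ≤ 1 := pow_le_one₀ hQ.1.le hQ.2.le
  nlinarith [hb.1, hb.2, pow_pos hQ.1 j]

lemma qPoch_le_one {Q b : ℝ} (hQ : Q ∈ Set.Ioo (0 : ℝ) 1) (hb : b ∈ Set.Ioo (0 : ℝ) 1) (k : ℕ) :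
    qPoch Q b k ≤ 1 := by
  refine Finset.prod_le_one (fun j _ => ?_) (fun j _ => ?_)
  · have h1 : Q ^ j ≤ 1 := pow_le_one₀ hQ.1.le hQ.2.le
    nlinarith [hb.1, hb.2, pow_pos hQ.1 j]
  · have := mul_pos hb.1 (pow_pos hQ.1 j)
    linarith

lemma qPoch_succ (Q b : ℝ) (k : ℕ) : qPoch Q b (k + 1) = qPoch Q b k * (1 - b * Q ^ k) :=
  Finset.prod_range_succ _ _

lemma qPoch_succ' (Q b : ℝ) (k : ℕ) : qPoch Q b (k + 1) = (1 - b) * qPoch Q (b * Q) k := by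
  unfold qPoch
  rw [Finset.prod_range_succ', mul_comm]
  simp [pow_succ', mul_assoc]

lemma qPoch_add (Q b : ℝ) (k m : ℕ) :
    qPoch Q b (k + m) = qPoch Q b k * ∏ j ∈ Finset.range m, (1 - b * Q ^ j * Q ^ k) := by
  unfold qPoch
  rw [Finset.prod_range_add]
  congr 1
  refine Finset.prod_congr rfl fun j _ => ?_
  rw [pow_add]; ring

/-- The partial products `(b;Q)_k` are bounded away from zero. -/
lemma exists_inv_qPoch_le {Q b : ℝ} (hQ : Q ∈ Set.Ioo (0 : ℝ) 1) (hb : b ∈ Set.Ioo (0 : ℝ) 1) :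
    ∃ K : ℝ, 0 < K ∧ ∀ k, (qPoch Q b k)⁻¹ ≤ K := by
  refine ⟨Real.exp ((1 - b)⁻¹ * (1 - Q)⁻¹), Real.exp_pos _, fun k => ?_⟩
  have hb' : 0 < 1 - b := by linarith [hb.2]
  have key : (qPoch Q b k)⁻¹ ≤ ∏ j ∈ Finset.range k, Real.exp ((1 - b)⁻¹ * Q ^ j) := by
    unfold qPoch
    rw [← Finset.prod_inv_distrib]
    have h0 : ∀ j : ℕ, 0 < 1 - b * Q ^ j := fun j => by
      have h1 : Q ^ j ≤ 1 := pow_le_one₀ hQ.1.le hQ.2.le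
      nlinarith [hb.1, hb.2, pow_pos hQ.1 j]
    refine Finset.prod_le_prod (fun j _ => (inv_pos.2 (h0 j)).le) fun j _ => ?_
    refine le_trans ?_ (Real.add_one_le_exp _)
    have h1 : Q ^ j ≤ 1 := pow_le_one₀ hQ.1.le hQ.2.le
    have h2 : 0 < Q ^ j := pow_pos hQ.1 j
    rw [inv_le_iff_one_le_mul₀ (h0 j)]
    have h3 : ((1 - b)⁻¹ * Q ^ j + 1) * (1 - b * Q ^ j) - 1
        = (1 - b)⁻¹ * Q ^ j * (b * (1 - Q ^ j) + (1 - b) * (1 - b)) := by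
      field_simp
      ring
    have h4 : 0 ≤ (1 - b)⁻¹ * Q ^ j * (b * (1 - Q ^ j) + (1 - b) * (1 - b)) := by
      have : 0 ≤ 1 - Q ^ j := by linarith
      have := hb.1
      positivity
    linarith
  refine key.trans ?_
  rw [← Real.exp_sum, ← Finset.mul_sum]
  refine Real.exp_le_exp.2 (mul_le_mul_of_nonneg_left ?_ (inv_pos.2 hb').le)
  rw [← tsum_geometric_of_lt_one hQ.1.le hQ.2]
  exact (summable_geometric_of_lt_one hQ.1.le hQ.2).sum_le_tsum _ fun j _ => (pow_pos hQ.1 j).le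

lemma sq_mem_Ioo {q : ℝ} (hq : q ∈ Set.Ioo (0 : ℝ) 1) : q ^ 2 ∈ Set.Ioo (0 : ℝ) 1 :=
  ⟨pow_pos hq.1 2, pow_lt_one₀ hq.1.le hq.2 two_ne_zero⟩

lemma mul_mem_Ioo {a b : ℝ} (ha : a ∈ Set.Ioo (0 : ℝ) 1) (hb : b ∈ Set.Ioo (0 : ℝ) 1) :
    a * b ∈ Set.Ioo (0 : ℝ) 1 :=
  ⟨mul_pos ha.1 hb.1, by nlinarith [ha.1, ha.2, hb.1, hb.2]⟩

lemma summable_pow_sq_mul_pow {p : ℝ} (hp : p ∈ Set.Ioo (0 : ℝ) 1) (z : ℝ) :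
    Summable fun n : ℕ => p ^ (n ^ 2) * z ^ n := by
  have ht : Filter.Tendsto (fun n : ℕ => p ^ n * |z|) Filter.atTop (nhds 0) := by
    simpa using (tendsto_pow_atTop_nhds_zero_of_lt_one hp.1.le hp.2).mul_const |z|
  have hev := ht.eventually (gt_mem_nhds (show (0 : ℝ) < 1 / 2 by norm_num))
  refine Summable.of_norm_bounded_eventually_nat
    (summable_geometric_of_lt_one (by norm_num) (show (1 / 2 : ℝ) < 1 by norm_num)) ?_
  filter_upwards [hev] with n hn
  have h : ‖p ^ (n ^ 2) * z ^ n‖ = (p ^ n * |z|) ^ n := by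
    rw [norm_mul, norm_pow, norm_pow, Real.norm_eq_abs, Real.norm_eq_abs, abs_of_pos hp.1,
      mul_pow, ← pow_mul, pow_two]
  rw [h]
  exact pow_le_pow_left₀ (mul_nonneg (pow_pos hp.1 n).le (abs_nonneg z)) hn.le n

/-! ### Euler's series for `(z;q²)_∞` -/

/-- The coefficients of Euler's expansion of `(z;q²)_∞`. -/
def eulerCoeff (q : ℝ) (k : ℕ) : ℝ := (-1) ^ k * q ^ (k * (k - 1)) / qPoch (q ^ 2) (q ^ 2) k

/-- Euler's series for `(z;q²)_∞`. -/
def eulerSeries (q z : ℝ) : ℝ := ∑' k : ℕ, eulerCoeff q k * z ^ k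

lemma eulerCoeff_zero (q : ℝ) : eulerCoeff q 0 = 1 := by simp [eulerCoeff, qPoch]

lemma eulerCoeff_succ {q : ℝ} (hq : q ∈ Set.Ioo (0 : ℝ) 1) (k : ℕ) :
    eulerCoeff q (k + 1) * (1 - (q ^ 2) ^ (k + 1)) = -(eulerCoeff q k * (q ^ 2) ^ k) := by
  have h1 := qPoch_pos (sq_mem_Ioo hq) (sq_mem_Ioo hq) k
  have h2 : (1 - (q ^ 2) ^ (k + 1)) ≠ 0 := by
    have := pow_lt_one₀ (sq_mem_Ioo hq).1.le (sq_mem_Ioo hq).2 (Nat.succ_ne_zero k)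
    exact (sub_pos.2 this).ne'
  have h3 : q ^ ((k + 1) * (k + 1 - 1)) = q ^ (k * (k - 1)) * (q ^ 2) ^ k := by
    rw [← pow_mul, ← pow_add]
    congr 1
    cases k with
    | zero => rfl
    | succ n => simp only [Nat.add_sub_cancel]; ring
  have h4 : qPoch (q ^ 2) (q ^ 2) (k + 1)
      = qPoch (q ^ 2) (q ^ 2) k * (1 - (q ^ 2) ^ (k + 1)) := by
    rw [qPoch_succ, pow_succ' (q ^ 2) k]
  unfold eulerCoeff
  rw [h3, h4, div_mul_eq_mul_div, mul_div_mul_right _ _ h2]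
  ring

lemma exists_abs_eulerCoeff_le {q : ℝ} (hq : q ∈ Set.Ioo (0 : ℝ) 1) :
    ∃ K : ℝ, 0 < K ∧ ∀ k, |eulerCoeff q k| ≤ K * q ^ (k * (k - 1)) := by
  obtain ⟨K, hK, h⟩ := exists_inv_qPoch_le (sq_mem_Ioo hq) (sq_mem_Ioo hq)
  refine ⟨K, hK, fun k => ?_⟩
  have h1 := qPoch_pos (sq_mem_Ioo hq) (sq_mem_Ioo hq) k
  have h2 := pow_pos hq.1 (k * (k - 1))
  unfold eulerCoeff
  rw [abs_div, abs_mul, abs_pow, abs_neg, abs_one, one_pow, one_mul, abs_of_pos h1, abs_of_pos h2,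
    div_eq_inv_mul]
  exact mul_le_mul_of_nonneg_right (h k) h2.le

lemma pow_mul_pred_mul_pow (q : ℝ) (k : ℕ) : q ^ (k * (k - 1)) * q ^ k = q ^ (k ^ 2) := by
  rw [← pow_add]
  congr 1
  cases k with
  | zero => rfl
  | succ n => simp only [Nat.add_sub_cancel]; ring

lemma summable_eulerCoeff {q : ℝ} (hq : q ∈ Set.Ioo (0 : ℝ) 1) (z : ℝ) :
    Summable fun k : ℕ => eulerCoeff q k * z ^ k := by
  obtain ⟨K, hK, h⟩ := exists_abs_eulerCoeff_le hq
  refine Summable.of_norm_bounded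
    ((summable_pow_sq_mul_pow hq (|z| / q)).mul_left K) fun k => ?_
  rw [norm_mul, norm_pow, Real.norm_eq_abs, Real.norm_eq_abs]
  have hqk : q ^ k ≠ 0 := (pow_pos hq.1 k).ne'
  calc |eulerCoeff q k| * |z| ^ k ≤ K * q ^ (k * (k - 1)) * |z| ^ k :=
        mul_le_mul_of_nonneg_right (h k) (by positivity)
    _ = K * (q ^ (k ^ 2) * (|z| / q) ^ k) := by
        rw [← pow_mul_pred_mul_pow, div_pow]
        field_simp

lemma eulerSeries_eq {q : ℝ} (hq : q ∈ Set.Ioo (0 : ℝ) 1) (z : ℝ) :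
    eulerSeries q z = (1 - z) * eulerSeries q (q ^ 2 * z) := by
  have h1 := summable_eulerCoeff hq z
  have h2 := summable_eulerCoeff hq (q ^ 2 * z)
  have h3 : eulerSeries q z - eulerSeries q (q ^ 2 * z) = -z * eulerSeries q (q ^ 2 * z) := by
    unfold eulerSeries
    rw [← h1.tsum_sub h2, (h1.sub h2).tsum_eq_zero_add, ← tsum_mul_left]
    simp only [pow_zero, sub_self, zero_add]
    refine tsum_congr fun k => ?_
    have := eulerCoeff_succ hq k
    calc _ = eulerCoeff q (k + 1) * (1 - (q ^ 2) ^ (k + 1)) * z ^ (k + 1) := by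
          rw [mul_pow]; ring
      _ = _ := by rw [this, mul_pow]; ring
  linarith

lemma eulerSeries_inv_pow {q : ℝ} (hq : q ∈ Set.Ioo (0 : ℝ) 1) (m : ℕ) :
    eulerSeries q (((q ^ 2) ^ m)⁻¹) = 0 := by
  induction m with
  | zero => rw [eulerSeries_eq hq]; simp
  | succ m ih =>
    rw [eulerSeries_eq hq]
    have h : q ^ 2 * ((q ^ 2) ^ (m + 1))⁻¹ = ((q ^ 2) ^ m)⁻¹ := by
      rw [pow_succ (q ^ 2) m, mul_inv, mul_left_comm, mul_inv_cancel₀ (sq_mem_Ioo hq).1.ne', mul_one]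
    rw [h, ih, mul_zero]

lemma eulerSeries_pow_pos {q : ℝ} (hq : q ∈ Set.Ioo (0 : ℝ) 1) (i : ℕ) :
    0 < eulerSeries q ((q ^ 2) ^ (i + 1)) := by
  have hQ := sq_mem_Ioo hq
  obtain ⟨N, hN⟩ : ∃ N : ℕ, ∀ n ≥ N, 0 < eulerSeries q ((q ^ 2) ^ (n + 1)) := by
    have hs : Summable fun k : ℕ => |eulerCoeff q (k + 1)| := by
      have := (summable_eulerCoeff hq 1).abs
      simp only [one_pow, mul_one] at this
      exact (summable_nat_add_iff 1).2 this
    have hlow : ∀ z ∈ Set.Icc (0 : ℝ) 1,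
        1 - z * ∑' k : ℕ, |eulerCoeff q (k + 1)| ≤ eulerSeries q z := by
      intro z hz
      have h0 := summable_eulerCoeff hq z
      have h1 : Summable fun k : ℕ => eulerCoeff q (k + 1) * z ^ (k + 1) :=
        (summable_nat_add_iff 1).2 h0
      unfold eulerSeries
      rw [h0.tsum_eq_zero_add, eulerCoeff_zero, pow_zero, mul_one, sub_eq_add_neg, ← tsum_mul_left,
        ← tsum_neg]
      refine add_le_add le_rfl ((hs.mul_left z).neg.tsum_le_tsum (fun k => ?_) h1)
      have h2 : z ^ (k + 1) ≤ z := by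
        rw [pow_succ]
        exact mul_le_of_le_one_left hz.1 (pow_le_one₀ hz.1 hz.2)
      have h3 : 0 ≤ z ^ (k + 1) := pow_nonneg hz.1 _
      have h4 := neg_abs_le (eulerCoeff q (k + 1))
      nlinarith [abs_nonneg (eulerCoeff q (k + 1))]
    have ht : Filter.Tendsto
        (fun n : ℕ => 1 - (q ^ 2) ^ (n + 1) * ∑' k : ℕ, |eulerCoeff q (k + 1)|)
        Filter.atTop (nhds 1) := by
      have := (((tendsto_pow_atTop_nhds_zero_of_lt_one hQ.1.le hQ.2).comp
        (Filter.tendsto_add_atTop_nat 1)).mul_const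
          (∑' k : ℕ, |eulerCoeff q (k + 1)|)).const_sub 1
      simpa using this
    obtain ⟨N, hN⟩ := Filter.eventually_atTop.1 (ht.eventually (lt_mem_nhds zero_lt_one))
    exact ⟨N, fun n hn => (hN n hn).trans_le
      (hlow _ ⟨(pow_pos hQ.1 _).le, pow_le_one₀ hQ.1.le hQ.2.le⟩)⟩
  have hdown : ∀ n, 0 < eulerSeries q ((q ^ 2) ^ (n + 1 + 1)) →
      0 < eulerSeries q ((q ^ 2) ^ (n + 1)) := by
    intro n hn
    rw [eulerSeries_eq hq, ← pow_succ']
    exact mul_pos (sub_pos.2 (pow_lt_one₀ hQ.1.le hQ.2 n.succ_ne_zero)) hn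
  have hall : ∀ m n, n + m ≥ N → 0 < eulerSeries q ((q ^ 2) ^ (n + 1)) := by
    intro m
    induction m with
    | zero => exact fun n hn => hN n hn
    | succ m ih => exact fun n hn => hdown n (ih (n + 1) (by omega))
  exact hall N i (by omega)

lemma hasSum_eulerCoeff_mul_prod {q : ℝ} (hq : q ∈ Set.Ioo (0 : ℝ) 1) (c : ℕ → ℝ) (l m : ℕ)
    (hlm : l ≤ m) :
    HasSum (fun k : ℕ => eulerCoeff q k * (((q ^ 2) ^ m)⁻¹) ^ k *
      ∏ j ∈ Finset.range l, (1 - c j * (q ^ 2) ^ k)) 0 := by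
  have hQ := (sq_mem_Ioo hq).1.ne'
  induction l generalizing m with
  | zero =>
    have h := (summable_eulerCoeff hq (((q ^ 2) ^ m)⁻¹)).hasSum
    have h0 : ∑' k : ℕ, eulerCoeff q k * (((q ^ 2) ^ m)⁻¹) ^ k = 0 := eulerSeries_inv_pow hq m
    rw [h0] at h
    simpa using h
  | succ l ih =>
    obtain ⟨m, rfl⟩ : ∃ m', m = m' + 1 := ⟨m - 1, by omega⟩
    have h := (ih (m + 1) (by omega)).sub ((ih m (by omega)).mul_left (c l))
    rw [mul_zero, sub_zero] at h
    refine Eq.mpr (congrArg (fun f => HasSum f 0) (funext fun k => ?_)) h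
    have h1 : (((q ^ 2) ^ (m + 1))⁻¹) ^ k * (q ^ 2) ^ k = (((q ^ 2) ^ m)⁻¹) ^ k := by
      rw [← mul_pow]
      congr 1
      rw [pow_succ (q ^ 2) m, mul_inv, mul_assoc, inv_mul_cancel₀ hQ, mul_one]
    rw [Finset.prod_range_succ, ← h1]
    ring

/-! ### An infinite triangular system -/

lemma tsum_eulerCoeff_mul_qPoch_eq_zero {q b : ℝ} (hq : q ∈ Set.Ioo (0 : ℝ) 1)
    (hb : b ∈ Set.Ioo (0 : ℝ) 1) (n : ℕ) :
    ∑' k : ℕ, eulerCoeff q k * (q ^ 2) ^ k / qPoch (q ^ 2) (b * q ^ 2) k *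
      (((q ^ 2) ^ ((n + 1) * k))⁻¹ * qPoch (q ^ 2) b (n + 1 + k)) = 0 := by
  have hQ := sq_mem_Ioo hq
  have h := (hasSum_eulerCoeff_mul_prod hq (fun j => b * q ^ 2 * (q ^ 2) ^ j) n n le_rfl).mul_left
    (1 - b)
  rw [mul_zero] at h
  rw [← h.tsum_eq]
  refine tsum_congr fun k => ?_
  have h1 : qPoch (q ^ 2) b (n + 1 + k) = (1 - b) * (qPoch (q ^ 2) (b * q ^ 2) k *
      ∏ j ∈ Finset.range n, (1 - b * q ^ 2 * (q ^ 2) ^ j * (q ^ 2) ^ k)) := by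
    rw [show n + 1 + k = (k + n) + 1 by ring, qPoch_succ', qPoch_add]
  have h2 : (q ^ 2) ^ k * ((q ^ 2) ^ ((n + 1) * k))⁻¹ = (((q ^ 2) ^ n)⁻¹) ^ k := by
    rw [inv_pow, ← pow_mul (q ^ 2) n k, add_mul, one_mul, pow_add, mul_inv, mul_left_comm,
      mul_inv_cancel₀ (pow_pos hQ.1 k).ne', mul_one]
  have h3 := (qPoch_pos hQ (mul_mem_Ioo hb hQ) k).ne'
  rw [h1, ← h2, div_mul_eq_mul_div, div_eq_iff h3]
  ring

lemma eulerCoeff_mul_qPoch_div_eq_tsum {q b : ℝ} (hq : q ∈ Set.Ioo (0 : ℝ) 1)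
    (hb : b ∈ Set.Ioo (0 : ℝ) 1) (k : ℕ) :
    eulerCoeff q k * (q ^ 2) ^ k / qPoch (q ^ 2) (b * q ^ 2) k * qPoch (q ^ 2) b k
      = (1 - b) * ∑' i : ℕ, b ^ i * (eulerCoeff q k * ((q ^ 2) ^ (i + 1)) ^ k) := by
  have hQ := sq_mem_Ioo hq
  have hlt := (mul_mem_Ioo hb hQ)
  have hbk : b * (q ^ 2) ^ k < 1 := by
    have h1 : (q ^ 2) ^ k ≤ 1 := pow_le_one₀ hQ.1.le hQ.2.le
    nlinarith [hb.1, hb.2, pow_pos hQ.1 k]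
  have hbk0 : 0 ≤ b * (q ^ 2) ^ k := (mul_pos hb.1 (pow_pos hQ.1 k)).le
  have h2 : ∀ i : ℕ, b ^ i * (eulerCoeff q k * ((q ^ 2) ^ (i + 1)) ^ k)
      = eulerCoeff q k * (q ^ 2) ^ k * (b * (q ^ 2) ^ k) ^ i := fun i => by
    rw [mul_pow, ← pow_mul, ← pow_mul (q ^ 2) k i, add_mul, one_mul, pow_add, mul_comm i k]
    ring
  simp only [h2]
  rw [tsum_mul_left, tsum_geometric_of_lt_one hbk0 hbk]
  have h3 := (qPoch_pos hQ hlt k).ne'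
  have h4 : (1 - b * (q ^ 2) ^ k) ≠ 0 := (sub_pos.2 hbk).ne'
  have h5 : qPoch (q ^ 2) b k * (1 - b * (q ^ 2) ^ k)
      = (1 - b) * qPoch (q ^ 2) (b * q ^ 2) k := by
    rw [← qPoch_succ, qPoch_succ']
  rw [div_mul_eq_mul_div, div_eq_iff h3]
  calc _ = eulerCoeff q k * (q ^ 2) ^ k *
        (qPoch (q ^ 2) b k * (1 - b * (q ^ 2) ^ k)) * (1 - b * (q ^ 2) ^ k)⁻¹ := by
        rw [← mul_assoc, mul_assoc _ _ (_)⁻¹, mul_inv_cancel₀ h4, mul_one]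
    _ = _ := by rw [h5]; ring

lemma tsum_eulerCoeff_mul_qPoch_pos {q b : ℝ} (hq : q ∈ Set.Ioo (0 : ℝ) 1)
    (hb : b ∈ Set.Ioo (0 : ℝ) 1) :
    0 < ∑' k : ℕ, eulerCoeff q k * (q ^ 2) ^ k / qPoch (q ^ 2) (b * q ^ 2) k *
      qPoch (q ^ 2) b k := by
  have hQ := sq_mem_Ioo hq
  have hsum : Summable fun p : ℕ × ℕ =>
      b ^ p.2 * (eulerCoeff q p.1 * ((q ^ 2) ^ (p.2 + 1)) ^ p.1) := by
    have h1 := (summable_eulerCoeff hq 1).abs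
    simp only [one_pow, mul_one] at h1
    refine Summable.of_norm_bounded (h1.mul_of_nonneg
      (summable_geometric_of_lt_one hb.1.le hb.2) (fun _ => abs_nonneg _)
      (fun i => (pow_pos hb.1 i).le)) fun p => ?_
    rw [norm_mul, norm_mul, Real.norm_eq_abs, Real.norm_eq_abs, Real.norm_eq_abs,
      abs_of_pos (pow_pos hb.1 _), abs_of_pos (pow_pos (pow_pos hQ.1 _) _), mul_comm]
    refine mul_le_mul_of_nonneg_right ?_ (pow_pos hb.1 _).le
    exact mul_le_of_le_one_right (abs_nonneg _)
      (pow_le_one₀ (pow_pos hQ.1 _).le (pow_le_one₀ hQ.1.le hQ.2.le))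
  rw [tsum_congr fun k => eulerCoeff_mul_qPoch_div_eq_tsum hq hb k, tsum_mul_left,
    ← Summable.tsum_comm (f := fun k i : ℕ =>
      b ^ i * (eulerCoeff q k * ((q ^ 2) ^ (i + 1)) ^ k)) hsum]
  have hin : ∀ i : ℕ, ∑' k : ℕ, b ^ i * (eulerCoeff q k * ((q ^ 2) ^ (i + 1)) ^ k)
      = b ^ i * eulerSeries q ((q ^ 2) ^ (i + 1)) := fun i => tsum_mul_left
  have hs2 : Summable fun i : ℕ => b ^ i * eulerSeries q ((q ^ 2) ^ (i + 1)) := by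
    have := hsum.prod_symm.prod
    simpa only [Prod.fst_swap, Prod.snd_swap, hin] using this
  rw [tsum_congr hin]
  refine mul_pos (sub_pos.2 hb.2) (hs2.tsum_pos
    (fun i => (mul_pos (pow_pos hb.1 i) (eulerSeries_pow_pos hq i)).le) 0 ?_)
  exact mul_pos (pow_pos hb.1 0) (eulerSeries_pow_pos hq 0)

lemma abs_mul_pow_mul_qPoch_le {q b σ D : ℝ} (hq : q ∈ Set.Ioo (0 : ℝ) 1)
    (hb : b ∈ Set.Ioo (0 : ℝ) 1) {d : ℕ → ℝ} (hd : ∀ n, |d n| ≤ D * σ ^ n * q ^ (n ^ 2))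
    (n k : ℕ) :
    |d n * (((q ^ 2) ^ (n * k))⁻¹ * qPoch (q ^ 2) b (n + k))|
      ≤ D * σ ^ n * q ^ (n ^ 2) * ((q ^ 2) ^ (n * k))⁻¹ := by
  have hQ := sq_mem_Ioo hq
  have h1 : 0 < ((q ^ 2) ^ (n * k))⁻¹ := inv_pos.2 (pow_pos hQ.1 _)
  have h2 := qPoch_pos hQ hb (n + k)
  rw [abs_mul, abs_of_pos (mul_pos h1 h2)]
  exact mul_le_mul (hd n) (mul_le_of_le_one_right h1.le (qPoch_le_one hQ hb _))
    (mul_pos h1 h2).le ((abs_nonneg _).trans (hd n))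

lemma summable_mul_pow_mul_qPoch {q b σ D : ℝ} (hq : q ∈ Set.Ioo (0 : ℝ) 1)
    (hb : b ∈ Set.Ioo (0 : ℝ) 1) {d : ℕ → ℝ} (hd : ∀ n, |d n| ≤ D * σ ^ n * q ^ (n ^ 2)) (k : ℕ) :
    Summable fun n : ℕ => d n * (((q ^ 2) ^ (n * k))⁻¹ * qPoch (q ^ 2) b (n + k)) := by
  refine Summable.of_norm_bounded
    ((summable_pow_sq_mul_pow hq (σ * ((q ^ 2) ^ k)⁻¹)).mul_left D) fun n => ?_
  refine (abs_mul_pow_mul_qPoch_le hq hb hd n k).trans_eq ?_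
  rw [mul_pow, inv_pow, ← pow_mul (q ^ 2) k n, mul_comm k n]
  ring

lemma triangular_head_eq_zero {q b σ D : ℝ} (hq : q ∈ Set.Ioo (0 : ℝ) 1)
    (hb : b ∈ Set.Ioo (0 : ℝ) 1) (hσ : σ ∈ Set.Ioo (0 : ℝ) 1) {d : ℕ → ℝ}
    (hd : ∀ n, |d n| ≤ D * σ ^ n * q ^ (n ^ 2))
    (hz : ∀ k : ℕ, ∑' n : ℕ, d n * (((q ^ 2) ^ (n * k))⁻¹ * qPoch (q ^ 2) b (n + k)) = 0) :
    d 0 = 0 := by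
  have hQ := sq_mem_Ioo hq
  have hbQ := mul_mem_Ioo hb hQ
  have hD : 0 ≤ D := by
    have := (abs_nonneg _).trans (hd 0)
    simpa using this
  obtain ⟨K, hK, hKe⟩ := exists_abs_eulerCoeff_le hq
  obtain ⟨L, hL, hLe⟩ := exists_inv_qPoch_le hQ hbQ
  set v : ℕ → ℝ := fun k => eulerCoeff q k * (q ^ 2) ^ k / qPoch (q ^ 2) (b * q ^ 2) k with hv
  have hvle : ∀ k, |v k| ≤ K * L * (q ^ (k ^ 2) * q ^ k) := by
    intro k
    have h1 := qPoch_pos hQ hbQ k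
    rw [hv]
    simp only
    rw [abs_div, abs_mul, abs_of_pos h1, abs_of_pos (pow_pos hQ.1 k), div_eq_mul_inv]
    calc |eulerCoeff q k| * (q ^ 2) ^ k * (qPoch (q ^ 2) (b * q ^ 2) k)⁻¹
        ≤ K * q ^ (k * (k - 1)) * (q ^ 2) ^ k * L := by
          have := pow_pos hQ.1 k
          have := inv_pos.2 h1
          have := pow_pos hq.1 (k * (k - 1))
          have := hKe k
          have := hLe k
          gcongr
      _ = _ := by rw [← pow_mul_pred_mul_pow q k]; ring
  have hsum : Summable fun p : ℕ × ℕ =>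
      v p.2 * (d p.1 * (((q ^ 2) ^ (p.1 * p.2))⁻¹ * qPoch (q ^ 2) b (p.1 + p.2))) := by
    refine Summable.of_norm_bounded (((summable_geometric_of_lt_one hσ.1.le hσ.2).mul_of_nonneg
      (summable_geometric_of_lt_one hq.1.le hq.2) (fun i => (pow_pos hσ.1 i).le)
      (fun i => (pow_pos hq.1 i).le)).mul_left (K * L * D)) ?_
    rintro ⟨n, k⟩
    simp only
    rw [norm_mul, Real.norm_eq_abs, Real.norm_eq_abs]
    have h0 := pow_pos hQ.1 (n * k)
    have hnk : q ^ (k ^ 2) * (q ^ (n ^ 2) * ((q ^ 2) ^ (n * k))⁻¹) ≤ 1 := by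
      rw [← mul_assoc, ← div_eq_mul_inv, div_le_one h0, ← pow_add, ← pow_mul]
      refine pow_le_pow_of_le_one hq.1.le hq.2.le ?_
      zify
      nlinarith [sq_nonneg ((n : ℤ) - k)]
    have hσn := pow_pos hσ.1 n
    have hqk := pow_pos hq.1 k
    calc |v k| * |d n * (((q ^ 2) ^ (n * k))⁻¹ * qPoch (q ^ 2) b (n + k))|
        ≤ (K * L * (q ^ (k ^ 2) * q ^ k)) *
          (D * σ ^ n * q ^ (n ^ 2) * ((q ^ 2) ^ (n * k))⁻¹) :=
          mul_le_mul (hvle k) (abs_mul_pow_mul_qPoch_le hq hb hd n k) (abs_nonneg _)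
            ((abs_nonneg _).trans (hvle k))
      _ = K * L * D * (σ ^ n * q ^ k) * (q ^ (k ^ 2) * (q ^ (n ^ 2) * ((q ^ 2) ^ (n * k))⁻¹)) := by
          ring
      _ ≤ K * L * D * (σ ^ n * q ^ k) :=
          mul_le_of_le_one_right (by positivity) hnk
  have hcomm := Summable.tsum_comm (f := fun n k : ℕ =>
    v k * (d n * (((q ^ 2) ^ (n * k))⁻¹ * qPoch (q ^ 2) b (n + k)))) hsum
  have hleft : ∑' k : ℕ, ∑' n : ℕ,
      v k * (d n * (((q ^ 2) ^ (n * k))⁻¹ * qPoch (q ^ 2) b (n + k))) = 0 := by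
    simp only [tsum_mul_left, hz, mul_zero, tsum_zero]
  have hinner : ∀ n : ℕ, ∑' k : ℕ,
      v k * (d n * (((q ^ 2) ^ (n * k))⁻¹ * qPoch (q ^ 2) b (n + k)))
      = d n * ∑' k : ℕ, v k * (((q ^ 2) ^ (n * k))⁻¹ * qPoch (q ^ 2) b (n + k)) := by
    intro n
    rw [← tsum_mul_left]
    exact tsum_congr fun k => by ring
  rw [hleft, tsum_congr hinner, tsum_eq_single 0] at hcomm
  · have hpos := tsum_eulerCoeff_mul_qPoch_pos hq hb
    simp only [zero_mul, pow_zero, inv_one, one_mul, zero_add] at hcomm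
    exact (mul_eq_zero.1 hcomm.symm).resolve_right hpos.ne'
  · intro n hn
    obtain ⟨m, rfl⟩ := Nat.exists_eq_succ_of_ne_zero hn
    rw [show ∑' k : ℕ, v k * (((q ^ 2) ^ (m.succ * k))⁻¹ * qPoch (q ^ 2) b (m.succ + k)) = 0 from
      tsum_eulerCoeff_mul_qPoch_eq_zero hq hb m, mul_zero]

/-- A sequence with `|d n| ≤ D σ^n q^(n²)`, `σ < 1`, that solves the homogeneous system with
matrix `q^(-2nk) (b;q²)_{n+k}` vanishes. -/
lemma triangular_eq_zero {q σ D : ℝ} (hq : q ∈ Set.Ioo (0 : ℝ) 1) (hσ : σ ∈ Set.Ioo (0 : ℝ) 1)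
    (m : ℕ) : ∀ {b : ℝ}, b ∈ Set.Ioo (0 : ℝ) 1 → ∀ {d : ℕ → ℝ},
    (∀ n, |d n| ≤ D * σ ^ n * q ^ (n ^ 2)) →
    (∀ k : ℕ, ∑' n : ℕ, d n * (((q ^ 2) ^ (n * k))⁻¹ * qPoch (q ^ 2) b (n + k)) = 0) →
    d m = 0 := by
  have hQ := sq_mem_Ioo hq
  induction m with
  | zero => exact fun hb _ hd hz => triangular_head_eq_zero hq hb hσ hd hz
  | succ m ih =>
    intro b hb d hd hz
    have h0 := triangular_head_eq_zero hq hb hσ hd hz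
    refine ih (mul_mem_Ioo hb hQ) (d := fun n => d (n + 1)) (fun n => (hd (n + 1)).trans ?_)
      fun k => ?_
    · have hD : 0 ≤ D := by
        have := (abs_nonneg _).trans (hd 0)
        simpa using this
      have h1 : σ ^ (n + 1) ≤ σ ^ n := pow_le_pow_of_le_one hσ.1.le hσ.2.le n.le_succ
      have h2 : q ^ ((n + 1) ^ 2) ≤ q ^ (n ^ 2) :=
        pow_le_pow_of_le_one hq.1.le hq.2.le (Nat.pow_le_pow_left n.le_succ 2)
      have := pow_pos hσ.1 n
      have := pow_pos hq.1 ((n + 1) ^ 2)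
      gcongr
    · have h := hz k
      rw [(summable_mul_pow_mul_qPoch hq hb hd k).tsum_eq_zero_add, h0, zero_mul, zero_add] at h
      have hterm : ∀ n : ℕ, d (n + 1) *
          (((q ^ 2) ^ ((n + 1) * k))⁻¹ * qPoch (q ^ 2) b (n + 1 + k))
          = ((q ^ 2) ^ k)⁻¹ * (1 - b) *
            (d (n + 1) * (((q ^ 2) ^ (n * k))⁻¹ * qPoch (q ^ 2) (b * q ^ 2) (n + k))) := by
        intro n
        rw [show n + 1 + k = n + k + 1 by ring, qPoch_succ', add_mul, one_mul, pow_add, mul_inv]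
        ring
      rw [tsum_congr hterm, tsum_mul_left] at h
      refine (mul_eq_zero.1 h).resolve_left ?_
      exact mul_ne_zero (inv_ne_zero (pow_pos hQ.1 k).ne') (sub_pos.2 hb.2).ne'

/-! ### The `q`-Gaussian and its moments on the lattice -/

lemma tendsto_prod_qPochInf {q : ℝ} (hq : q ∈ Set.Ioo (0 : ℝ) 1) (x : ℝ) :
    Filter.Tendsto (fun n => ∏ j ∈ Finset.range n, (1 - -(x ^ 2) * (q ^ 2) ^ j)) Filter.atTop
      (nhds (qPochInf (q ^ 2) (-(x ^ 2)))) := by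
  have hQ := sq_mem_Ioo hq
  have hs : Summable fun j : ℕ => x ^ 2 * (q ^ 2) ^ j :=
    (summable_geometric_of_lt_one hQ.1.le hQ.2).mul_left _
  have hm : Multipliable fun j : ℕ => (1 - -(x ^ 2) * (q ^ 2) ^ j) := by
    have := Real.multipliable_one_add_of_summable hs
    simpa only [neg_mul, sub_neg_eq_add] using this
  exact hm.hasProd.tendsto_prod_nat

lemma qPochInf_eq {q : ℝ} (hq : q ∈ Set.Ioo (0 : ℝ) 1) (x : ℝ) :
    qPochInf (q ^ 2) (-(x ^ 2)) = (1 + x ^ 2) * qPochInf (q ^ 2) (-((q * x) ^ 2)) := by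
  refine tendsto_nhds_unique
    ((tendsto_prod_qPochInf hq x).comp (Filter.tendsto_add_atTop_nat 1)) ?_
  refine ((tendsto_prod_qPochInf hq (q * x)).const_mul (1 + x ^ 2)).congr fun n => ?_
  rw [Function.comp_apply, Finset.prod_range_succ', mul_comm]
  congr 1
  · refine Finset.prod_congr rfl fun j _ => ?_
    ring
  · ring

lemma exists_mul_pow_le_qPochInf {q : ℝ} (hq : q ∈ Set.Ioo (0 : ℝ) 1) (p : ℕ) :
    ∃ c : ℝ, 0 < c ∧ ∀ x : ℝ, c * x ^ (2 * p) ≤ qPochInf (q ^ 2) (-(x ^ 2)) := by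
  induction p with
  | zero => exact ⟨1, one_pos, fun x => by simpa using one_le_qPochInf hq x⟩
  | succ p ih =>
    obtain ⟨c, hc, h⟩ := ih
    refine ⟨c * q ^ (2 * p), mul_pos hc (pow_pos hq.1 _), fun x => ?_⟩
    rw [qPochInf_eq hq]
    have h1 := h (q * x)
    have h2 := one_le_qPochInf hq (q * x)
    calc c * q ^ (2 * p) * x ^ (2 * (p + 1)) = x ^ 2 * (c * (q * x) ^ (2 * p)) := by
          rw [mul_pow]; ring
      _ ≤ x ^ 2 * qPochInf (q ^ 2) (-((q * x) ^ 2)) := mul_le_mul_of_nonneg_left h1 (sq_nonneg x)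
      _ ≤ _ := by nlinarith

lemma qGauss_le_one {q : ℝ} (hq : q ∈ Set.Ioo (0 : ℝ) 1) (x : ℝ) : qGauss q x ≤ 1 :=
  (div_le_one (one_pos.trans_le (one_le_qPochInf hq x))).2 (one_le_qPochInf hq x)

lemma qGauss_neg (q x : ℝ) : qGauss q (-x) = qGauss q x := by
  simp [qGauss]

/-- The `2j`-th moment of the `q`-Gaussian over the positive half of the lattice, up to the factor
`1 - q`. -/
def halfMoment (q γ : ℝ) (j : ℕ) : ℝ :=
  ∑' i : ℤ, (q ^ i * γ) ^ (2 * j + 1) * qGauss q (q ^ i * γ)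

lemma lattice_pos {q γ : ℝ} (hq : q ∈ Set.Ioo (0 : ℝ) 1) (hγ : 0 < γ) (i : ℤ) : 0 < q ^ i * γ :=
  mul_pos (zpow_pos hq.1 i) hγ

lemma halfMoment_term_pos {q γ : ℝ} (hq : q ∈ Set.Ioo (0 : ℝ) 1) (hγ : 0 < γ) (j : ℕ) (i : ℤ) :
    0 < (q ^ i * γ) ^ (2 * j + 1) * qGauss q (q ^ i * γ) :=
  mul_pos (pow_pos (lattice_pos hq hγ i) _) (qGauss_pos hq _)

lemma summable_halfMoment {q γ : ℝ} (hq : q ∈ Set.Ioo (0 : ℝ) 1) (hγ : 0 < γ) (j : ℕ) :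
    Summable fun i : ℤ => (q ^ i * γ) ^ (2 * j + 1) * qGauss q (q ^ i * γ) := by
  refine Summable.of_nat_of_neg ?_ ?_
  · refine Summable.of_nonneg_of_le (fun n => (halfMoment_term_pos hq hγ j n).le) (fun n => ?_)
      ((summable_geometric_of_lt_one (pow_pos hq.1 (2 * j + 1)).le
        (pow_lt_one₀ hq.1.le hq.2 (by omega))).mul_right (γ ^ (2 * j + 1)))
    refine (mul_le_of_le_one_right (pow_pos (lattice_pos hq hγ n) _).le
      (qGauss_le_one hq _)).trans_eq ?_
    rw [mul_pow, zpow_natCast, ← pow_mul, ← pow_mul, mul_comm n]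
  · obtain ⟨c, hc, h⟩ := exists_mul_pow_le_qPochInf hq (j + 1)
    refine Summable.of_nonneg_of_le (fun n => (halfMoment_term_pos hq hγ j (-n)).le) (fun n => ?_)
      ((summable_geometric_of_lt_one hq.1.le hq.2).mul_left (c * γ)⁻¹)
    have hx := lattice_pos hq hγ (-(n : ℤ))
    have hxinv : (q ^ (-(n : ℤ)) * γ)⁻¹ = q ^ n * γ⁻¹ := by
      rw [mul_inv, zpow_neg, inv_inv, zpow_natCast]
    rw [mul_inv, mul_assoc, mul_comm γ⁻¹, ← hxinv]
    set x := q ^ (-(n : ℤ)) * γ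
    have hxc : 0 < c * x ^ (2 * (j + 1)) := mul_pos hc (pow_pos hx _)
    calc x ^ (2 * j + 1) * qGauss q x ≤ x ^ (2 * j + 1) * (1 / (c * x ^ (2 * (j + 1)))) :=
          mul_le_mul_of_nonneg_left (one_div_le_one_div_of_le hxc (h x)) (pow_pos hx _).le
      _ = c⁻¹ * x⁻¹ := by
          have := hx.ne'
          have := hc.ne'
          rw [show 2 * (j + 1) = 2 * j + 1 + 1 by ring, pow_succ x (2 * j + 1)]
          field_simp

lemma halfMoment_pos {q γ : ℝ} (hq : q ∈ Set.Ioo (0 : ℝ) 1) (hγ : 0 < γ) (j : ℕ) :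
    0 < halfMoment q γ j :=
  (summable_halfMoment hq hγ j).tsum_pos (fun i => (halfMoment_term_pos hq hγ j i).le) 0
    (halfMoment_term_pos hq hγ j 0)

lemma halfMoment_succ {q γ : ℝ} (hq : q ∈ Set.Ioo (0 : ℝ) 1) (hγ : 0 < γ) (j : ℕ) :
    halfMoment q γ j = q ^ (2 * j + 1) * (halfMoment q γ j + halfMoment q γ (j + 1)) := by
  have h : halfMoment q γ j
      = ∑' i : ℤ, (q ^ (i + 1) * γ) ^ (2 * j + 1) * qGauss q (q ^ (i + 1) * γ) :=
    ((Equiv.addRight (1 : ℤ)).tsum_eq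
      fun i : ℤ => (q ^ i * γ) ^ (2 * j + 1) * qGauss q (q ^ i * γ)).symm
  conv_lhs => rw [h]
  unfold halfMoment
  rw [← (summable_halfMoment hq hγ j).tsum_add (summable_halfMoment hq hγ (j + 1)),
    ← tsum_mul_left]
  refine tsum_congr fun i => ?_
  have hi : q ^ (i + 1) * γ = q * (q ^ i * γ) := by
    rw [zpow_add_one₀ hq.1.ne']; ring
  rw [hi, qGauss_mul hq]
  ring

lemma halfMoment_eq {q γ : ℝ} (hq : q ∈ Set.Ioo (0 : ℝ) 1) (hγ : 0 < γ) (j : ℕ) :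
    halfMoment q γ j = halfMoment q γ 0 * ((q ^ (j ^ 2))⁻¹ * qPoch (q ^ 2) q j) := by
  induction j with
  | zero => simp [qPoch]
  | succ j ih =>
    have h := halfMoment_succ hq hγ j
    have hp : q ^ (2 * j + 1) ≠ 0 := (pow_pos hq.1 _).ne'
    have h1 : halfMoment q γ (j + 1) = (q ^ (2 * j + 1))⁻¹ * (1 - q ^ (2 * j + 1)) *
        halfMoment q γ j := by
      rw [mul_assoc, eq_inv_mul_iff_mul_eq₀ hp]
      linarith
    rw [h1, ih, qPoch_succ, show (j + 1) ^ 2 = j ^ 2 + (2 * j + 1) by ring, pow_add q (j ^ 2),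
      mul_inv, show q * (q ^ 2) ^ j = q ^ (2 * j + 1) by ring]
    ring

/-! ### Moment determinacy -/

lemma summable_coeff_mul_pow {q s C : ℝ} (hq : q ∈ Set.Ioo (0 : ℝ) 1) {a : ℕ → ℝ}
    (ha : ∀ n : ℕ, |a n| ≤ C * s ^ n * q ^ (((n : ℝ) ^ 2) / 2)) (x : ℝ) :
    Summable fun n : ℕ => a n * x ^ n := by
  have hp : Real.sqrt q ∈ Set.Ioo (0 : ℝ) 1 :=
    ⟨Real.sqrt_pos.2 hq.1, by rw [Real.sqrt_lt' one_pos]; simpa using hq.2⟩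
  refine Summable.of_norm_bounded
    ((summable_pow_sq_mul_pow hp (s * |x|)).mul_left C) fun n => ?_
  have h : q ^ (((n : ℝ) ^ 2) / 2) = Real.sqrt q ^ (n ^ 2) := by
    rw [Real.sqrt_eq_rpow, ← Real.rpow_natCast (q ^ (1 / 2 : ℝ)), ← Real.rpow_mul hq.1.le]
    congr 1
    push_cast
    ring
  have h1 := ha n
  rw [norm_mul, norm_pow, Real.norm_eq_abs, Real.norm_eq_abs]
  calc |a n| * |x| ^ n ≤ C * s ^ n * q ^ (((n : ℝ) ^ 2) / 2) * |x| ^ n :=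
        mul_le_mul_of_nonneg_right h1 (by positivity)
    _ = _ := by rw [h, mul_pow]; ring

/-- A power series restricted to exponents of the parity of `ε`, evaluated symmetrically. -/
lemma tsum_add_tsum_neg {a : ℕ → ℝ} (hs : ∀ x : ℝ, Summable fun n : ℕ => a n * x ^ n) (x : ℝ)
    {ε : ℕ} (hε : ε < 2) :
    (∑' n : ℕ, a n * x ^ n) + (-1) ^ ε * ∑' n : ℕ, a n * (-x) ^ n
      = 2 * ∑' n : ℕ, a (2 * n + ε) * x ^ (2 * n + ε) := by
  have hinj : Function.Injective fun n : ℕ => 2 * n + ε := fun m n h => by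
    simp only at h; omega
  rw [← tsum_mul_left, ← tsum_mul_left, ← (hs x).tsum_add ((hs (-x)).mul_left _)]
  have hterm : ∀ n : ℕ, a n * x ^ n + (-1) ^ ε * (a n * (-x) ^ n)
      = (1 + (-1) ^ (ε + n)) * (a n * x ^ n) := fun n => by
    rw [neg_pow x n, pow_add]; ring
  rw [tsum_congr hterm, ← hinj.tsum_eq]
  · refine tsum_congr fun n => ?_
    rw [show ε + (2 * n + ε) = 2 * (n + ε) by ring, pow_mul]
    norm_num
  · intro n hn
    by_contra hcon
    refine hn ?_
    have hodd : Odd (ε + n) := by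
      rw [← Nat.not_even_iff_odd]
      rintro ⟨r, hr⟩
      exact hcon ⟨r - ε, by simp only; omega⟩
    simp only [hodd.neg_one_pow, add_neg_cancel, zero_mul]

lemma coeff_bound {q s C : ℝ} (hq : q ∈ Set.Ioo (0 : ℝ) 1) (hs : s ∈ Set.Ioo (0 : ℝ) 1)
    (hC : 0 < C) {a : ℕ → ℝ}
    (ha : ∀ n : ℕ, |a n| ≤ C * s ^ n * q ^ (((n : ℝ) ^ 2) / 2)) (ε n : ℕ) :
    |a (2 * n + ε) * (q ^ (n ^ 2 + 2 * n * ε))⁻¹| ≤ C * (s ^ 2) ^ n * q ^ (n ^ 2) := by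
  have hp := pow_pos hq.1 (n ^ 2 + 2 * n * ε)
  rw [abs_mul, abs_of_pos (inv_pos.2 hp), ← div_eq_mul_inv, div_le_iff₀ hp]
  refine (ha _).trans ?_
  have h1 : s ^ (2 * n + ε) ≤ (s ^ 2) ^ n := by
    rw [← pow_mul]
    exact pow_le_pow_of_le_one hs.1.le hs.2.le (by omega)
  have h2 : q ^ ((((2 * n + ε : ℕ) : ℝ) ^ 2) / 2) ≤ q ^ (n ^ 2) * q ^ (n ^ 2 + 2 * n * ε) := by
    rw [← pow_add, ← Real.rpow_natCast q (_ + _)]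
    refine Real.rpow_le_rpow_of_exponent_ge hq.1 hq.2.le ?_
    push_cast
    nlinarith [sq_nonneg (ε : ℝ)]
  have h3 : 0 ≤ (s ^ 2) ^ n := by positivity
  have h4 : 0 ≤ q ^ ((((2 * n + ε : ℕ) : ℝ) ^ 2) / 2) := Real.rpow_nonneg hq.1.le _
  rw [mul_assoc _ (q ^ n ^ 2)]
  gcongr

/-- Exchanging summation over the lattice with the power series expansion. -/
lemma tsum_lattice_comm {q γ : ℝ} (hq : q ∈ Set.Ioo (0 : ℝ) 1) (hγ : 0 < γ) {b : ℕ → ℝ} {l : ℕ}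
    (hb : Summable fun n : ℕ => |b n| * halfMoment q γ (n + l)) :
    ∑' i : ℤ, ∑' n : ℕ, b n * ((q ^ i * γ) ^ (2 * (n + l) + 1) * qGauss q (q ^ i * γ))
      = ∑' n : ℕ, b n * halfMoment q γ (n + l) := by
  have hsum : Summable fun p : ℕ × ℤ =>
      b p.1 * ((q ^ p.2 * γ) ^ (2 * (p.1 + l) + 1) * qGauss q (q ^ p.2 * γ)) := by
    refine Summable.of_abs ((summable_prod_of_nonneg fun p => abs_nonneg _).2 ⟨fun n => ?_, ?_⟩)
    · exact ((summable_halfMoment hq hγ (n + l)).mul_left (b n)).abs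
    · refine hb.congr fun n => ?_
      unfold halfMoment
      rw [← tsum_mul_left]
      refine tsum_congr fun i => ?_
      rw [abs_mul, abs_of_pos (halfMoment_term_pos hq hγ _ i)]
  rw [Summable.tsum_comm (f := fun (n : ℕ) (i : ℤ) =>
    b n * ((q ^ i * γ) ^ (2 * (n + l) + 1) * qGauss q (q ^ i * γ))) hsum]
  exact tsum_congr fun n => tsum_mul_left

lemma coeff_eq_zero {q γ s C : ℝ} (hq : q ∈ Set.Ioo (0 : ℝ) 1) (hγ : 0 < γ)
    (hs : s ∈ Set.Ioo (0 : ℝ) 1) (hC : 0 < C) {a : ℕ → ℝ}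
    (ha : ∀ n : ℕ, |a n| ≤ C * s ^ n * q ^ (((n : ℝ) ^ 2) / 2))
    (hmom : ∀ k : ℕ, qInt q γ (fun x => (∑' n : ℕ, a n * x ^ n) * qGauss q x * x ^ k) = 0)
    {ε : ℕ} (hε : ε < 2) (m : ℕ) : a (2 * m + ε) = 0 := by
  have hQ := sq_mem_Ioo hq
  have hpε : q * (q ^ 2) ^ ε ∈ Set.Ioo (0 : ℝ) 1 :=
    ⟨mul_pos hq.1 (pow_pos hQ.1 _), by
      have : (q ^ 2) ^ ε ≤ 1 := pow_le_one₀ hQ.1.le hQ.2.le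
      nlinarith [hq.1, hq.2]⟩
  set d : ℕ → ℝ := fun n => a (2 * n + ε) * (q ^ (n ^ 2 + 2 * n * ε))⁻¹ with hd
  have hdle : ∀ n, |d n| ≤ C * (s ^ 2) ^ n * q ^ (n ^ 2) := coeff_bound hq hs hC ha ε
  have hpε' : 0 < qPoch (q ^ 2) q ε := qPoch_pos hQ hq ε
  have hM := halfMoment_pos hq hγ 0
  have hfac : ∀ k n : ℕ, a (2 * n + ε) * halfMoment q γ (n + (k + ε))
      = halfMoment q γ 0 * qPoch (q ^ 2) q ε * (q ^ ((k + ε) ^ 2))⁻¹ *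
        (d n * (((q ^ 2) ^ (n * k))⁻¹ * qPoch (q ^ 2) (q * (q ^ 2) ^ ε) (n + k))) := by
    intro k n
    have h1 : qPoch (q ^ 2) q (n + (k + ε))
        = qPoch (q ^ 2) q ε * qPoch (q ^ 2) (q * (q ^ 2) ^ ε) (n + k) := by
      rw [show n + (k + ε) = ε + (n + k) by ring, qPoch_add]
      congr 1
      exact Finset.prod_congr rfl fun j _ => by ring
    have h2 : q ^ ((n + (k + ε)) ^ 2)
        = q ^ ((k + ε) ^ 2) * q ^ (n ^ 2 + 2 * n * ε) * (q ^ 2) ^ (n * k) := by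
      rw [← pow_mul, ← pow_add, ← pow_add]
      congr 1
      ring
    rw [halfMoment_eq hq hγ, h1, h2, hd]
    simp only [mul_inv]
    ring
  have hz : ∀ k : ℕ, ∑' n : ℕ,
      d n * (((q ^ 2) ^ (n * k))⁻¹ * qPoch (q ^ 2) (q * (q ^ 2) ^ ε) (n + k)) = 0 := by
    intro k
    have hsum : Summable fun n : ℕ => |a (2 * n + ε)| * halfMoment q γ (n + (k + ε)) := by
      have := ((summable_mul_pow_mul_qPoch hq hpε hdle k).mul_left
        (halfMoment q γ 0 * qPoch (q ^ 2) q ε * (q ^ ((k + ε) ^ 2))⁻¹)).abs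
      refine this.congr fun n => ?_
      rw [← hfac, abs_mul, abs_of_pos (halfMoment_pos hq hγ _)]
    have h := hmom (2 * k + ε)
    unfold qInt at h
    have h' := (mul_eq_zero.1 h).resolve_left (sub_pos.2 hq.2).ne'
    have hterm : ∀ i : ℤ, (q ^ i * γ) *
        ((∑' n : ℕ, a n * (q ^ i * γ) ^ n) * qGauss q (q ^ i * γ) * (q ^ i * γ) ^ (2 * k + ε) +
        (∑' n : ℕ, a n * (-(q ^ i * γ)) ^ n) * qGauss q (-(q ^ i * γ)) *
          (-(q ^ i * γ)) ^ (2 * k + ε))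
        = 2 * ∑' n : ℕ, a (2 * n + ε) *
          ((q ^ i * γ) ^ (2 * (n + (k + ε)) + 1) * qGauss q (q ^ i * γ)) := by
      intro i
      generalize q ^ i * γ = x
      have hpar := tsum_add_tsum_neg (summable_coeff_mul_pow hq ha) x hε
      have hneg : (-x) ^ (2 * k + ε) = (-1) ^ ε * x ^ (2 * k + ε) := by
        rw [neg_pow, pow_add, pow_mul]; norm_num
      rw [qGauss_neg, hneg]
      calc _ = ((∑' n : ℕ, a n * x ^ n) + (-1) ^ ε * ∑' n : ℕ, a n * (-x) ^ n) *
            (x * x ^ (2 * k + ε) * qGauss q x) := by ring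
        _ = _ := by
          rw [hpar, mul_assoc, ← tsum_mul_right]
          congr 1
          refine tsum_congr fun n => ?_
          ring
    rw [tsum_congr hterm, tsum_mul_left,
      tsum_lattice_comm hq hγ (b := fun n => a (2 * n + ε)) hsum] at h'
    have h'' := (mul_eq_zero.1 h').resolve_left two_ne_zero
    rw [tsum_congr (hfac k), tsum_mul_left] at h''
    refine (mul_eq_zero.1 h'').resolve_left ?_
    exact mul_ne_zero (mul_pos hM hpε').ne' (inv_ne_zero (pow_pos hq.1 _).ne')
  have hdm := triangular_eq_zero hq (sq_mem_Ioo hs) m hpε hdle hz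
  exact (mul_eq_zero.1 hdm).resolve_right (inv_ne_zero (pow_pos hq.1 _).ne')

/-- Moment-determinacy lemma, general case. -/
theorem stmt8 (q γ s : ℝ) (hq : q ∈ Set.Ioo (0 : ℝ) 1) (hγ : 0 < γ)
    (hs : s ∈ Set.Ioo (0 : ℝ) 1)
    (a : ℕ → ℝ) (C : ℝ) (hC : 0 < C)
    (ha : ∀ n : ℕ, |a n| ≤ C * s ^ n * q ^ (((n : ℝ) ^ 2) / 2))
    (F : ℝ → ℝ) (hF : ∀ x, F x = (∑' n : ℕ, a n * x ^ n) * qGauss q x)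
    (hmom : ∀ k : ℕ, qInt q γ (fun x => F x * x ^ k) = 0) :
    ∀ x, F x = 0 := by
  intro x
  have hFeq : F = fun x => (∑' n : ℕ, a n * x ^ n) * qGauss q x := funext hF
  subst hFeq
  have h0 : ∀ n, a n = 0 := fun n => by
    have := coeff_eq_zero hq hγ hs hC ha hmom (Nat.mod_lt n two_pos) (n / 2)
    rwa [Nat.div_add_mod] at this
  simp [h0]
end
end
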